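/- Fixed-α posterior second-moment bounds: let γ be the standard Cauchy or standard Laplace density. There exists C > 0 such that for any real x and any α ∈ [0,1/2]: (i) r_2(α,0,x) ≤ C·[1 ∧ (α/(1−α))·(g/φ)(x)]·(1+x²); (ii) for any real μ, r_2(α,μ,x) ≤ (1−a(x))·μ² + C·a(x)·((x−μ)²+1). If moreover γ is the standard Cauchy density, then for X ~ N(0,1), E_0[r_2(α,0,X)] ≤ C·τ(α)·α, and for X ~ N(μ,1) with any real μ, E_μ[r_2(α,μ,X)] ≤ C·(1 + τ̃(α)²). -/

import Mathlib

/-!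
Statement 5: fixed-α bounds on the posterior second moment `r₂(α, μ, x)`
for spike and slab priors with Cauchy or Laplace slab.
-/

open MeasureTheory Real Set

noncomputable section

/-- Standard normal density. -/
def phi (x : ℝ) : ℝ := Real.exp (-x ^ 2 / 2) / Real.sqrt (2 * Real.pi)

/-- Standard Laplace density. -/
def lapDen (x : ℝ) : ℝ := Real.exp (-|x|) / 2

/-- Standard Cauchy density. -/
def cauchyDen (x : ℝ) : ℝ := (Real.pi * (1 + x ^ 2))⁻¹

/-- Convolution `g = φ * γ`. -/
def conv (γ : ℝ → ℝ) (x : ℝ) : ℝ := ∫ u, phi (x - u) * γ u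

/-- Posterior weight `a(x) = α g(x) / ((1-α) φ(x) + α g(x))`. -/
def aWt (γ : ℝ → ℝ) (α x : ℝ) : ℝ :=
  α * conv γ x / ((1 - α) * phi x + α * conv γ x)

/-- Density of the single-coordinate posterior with respect to `volume + δ₀`:
the point mass `1 - a(x)` at `0`, and the continuous part `a(x) γ_x`. -/
def coordDen (γ : ℝ → ℝ) (α x u : ℝ) : ℝ :=
  if u = 0 then 1 - aWt γ α x else aWt γ α x * (phi (x - u) * γ u / conv γ x)

/-- Single-coordinate posterior `π_α(⋅|x) = (1 - a(x)) δ₀ + a(x) γ_x`. -/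
def coordPost (γ : ℝ → ℝ) (α x : ℝ) : Measure ℝ :=
  (volume + Measure.dirac (0 : ℝ)).withDensity fun u => ENNReal.ofReal (coordDen γ α x u)

/-- Posterior second moment `r₂(α, μ, x) = ∫ (u - μ)² dπ_α(u|x)`. -/
def r2 (γ : ℝ → ℝ) (α μ x : ℝ) : ℝ := ∫ u, (u - μ) ^ 2 ∂(coordPost γ α x)

/-!
Both slabs have a Lipschitz logarithm, so `γ (x + z)` is comparable to `γ x` up to `exp (±L|z|)`.
Since the slab posterior is the law `N(x, 1)` reweighted by `γ`, its second moment around `μ` is at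
most a constant times `(x - μ)² + 1`; with `a ≤ min 1 odds` this gives the pointwise bounds.

For the null signal, let the odds cross `1` at `t`. Where `|x| ≤ t`, the product of the odds with
`φ x` is `α / (1 - α) * g x`, and `g x ≲ (1 + x²)⁻¹`; where `|x| ≥ t`, the Gaussian tail is compared
with `φ t = α / (1 - α) * g t`. The result is `α * O(t + 1)`, and `t` is bounded away from `0`
because `φ t ≤ g t ≤ sup γ < φ 0`.

For an arbitrary signal, `g` inherits the Lipschitz logarithm of `γ`, hence at distance
`s = |x| - t` beyond the threshold `1 - a x ≤ exp (L s - s² / 2)`, and `(1 - a x) μ²` is bounded by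
`(x - μ)² + t²` up to constants.
-/

open ProbabilityTheory
open scoped NNReal

/-! ### Gaussian integrals -/

lemma phi_eq_gaussianPDFReal : phi = gaussianPDFReal 0 1 := by
  ext x
  simp [phi, gaussianPDFReal, div_eq_inv_mul]

lemma phi_pos (x : ℝ) : 0 < phi x := by
  unfold phi
  positivity

lemma continuous_phi : Continuous phi := by
  unfold phi
  fun_prop

lemma phi_neg (x : ℝ) : phi (-x) = phi x := by simp only [phi, neg_sq]

lemma phi_le_of_le_abs {t x : ℝ} (ht : 0 ≤ t) (hx : t ≤ |x|) :
    phi x ≤ phi t * rexp (-(|x| - t) ^ 2 / 2) := by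
  unfold phi
  rw [div_mul_eq_mul_div, ← Real.exp_add]
  gcongr
  nlinarith [sq_abs x]

lemma phi_zero_mul_exp (s : ℝ) : phi 0 * rexp (-s ^ 2 / 2) = phi s := by
  simp only [phi, ne_eq, OfNat.ofNat_ne_zero, not_false_eq_true, zero_pow, neg_zero, zero_div,
    Real.exp_zero, one_div_mul_eq_div]

lemma exists_pos_le_of_phi_le {B : ℝ} (hB : B < phi 0) :
    ∃ ε > 0, ∀ t, 0 ≤ t → phi t ≤ B → ε ≤ t := by
  obtain ⟨ε, hε, h⟩ := Metric.eventually_nhds_iff.1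
    ((continuous_phi.tendsto 0).eventually (lt_mem_nhds hB))
  refine ⟨ε, hε, fun t ht htB ↦ ?_⟩
  by_contra! hlt
  exact (h (by rwa [Real.dist_eq, sub_zero, abs_of_nonneg ht])).not_ge htB

lemma integral_gaussianReal_eq_integral_phi_mul (F : ℝ → ℝ) :
    ∫ z, F z ∂gaussianReal 0 1 = ∫ z, phi z * F z := by
  rw [integral_gaussianReal_eq_integral_smul one_ne_zero, phi_eq_gaussianPDFReal]
  rfl

lemma integral_phi_sub_mul (F : ℝ → ℝ) (x : ℝ) :
    ∫ u, phi (x - u) * F u = ∫ z, F (x + z) ∂gaussianReal 0 1 := by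
  rw [integral_gaussianReal_eq_integral_phi_mul,
    ← integral_add_left_eq_self (fun u ↦ phi (x - u) * F u) x]
  simp only [sub_add_cancel_left, phi_neg]

lemma integrable_phi_sub_mul {F : ℝ → ℝ} {x : ℝ}
    (hF : Integrable (fun z ↦ F (x + z)) (gaussianReal 0 1)) :
    Integrable fun u ↦ phi (x - u) * F u := by
  rw [gaussianReal_of_var_ne_zero 0 one_ne_zero, integrable_withDensity_iff_integrable_smul'
    (measurable_gaussianPDF 0 1) (.of_forall fun _ ↦ gaussianPDF_lt_top)] at hF
  simp only [toReal_gaussianPDF, ← phi_eq_gaussianPDFReal, smul_eq_mul] at hF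
  refine (hF.comp_sub_right x).congr (.of_forall fun u ↦ ?_)
  simp only [← phi_neg (x - u), neg_sub, add_sub_cancel]

lemma conv_eq_integral (γ : ℝ → ℝ) (x : ℝ) :
    conv γ x = ∫ z, γ (x + z) ∂gaussianReal 0 1 :=
  integral_phi_sub_mul γ x

lemma conv_neg {γ : ℝ → ℝ} (hγ : Function.Even γ) (x : ℝ) : conv γ (-x) = conv γ x := by
  unfold conv
  rw [← integral_neg_eq_self]
  refine integral_congr_ae (.of_forall fun u ↦ ?_)
  simp only [hγ u, ← phi_neg (x - u)]
  ring_nf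

lemma conv_abs {γ : ℝ → ℝ} (hγ : Function.Even γ) (x : ℝ) : conv γ |x| = conv γ x := by
  rcases abs_choice x with h | h <;> simp only [h, conv_neg hγ]

lemma integrable_sub_sq_gaussianReal (μ : ℝ) (v : ℝ≥0) :
    Integrable (fun x ↦ (x - μ) ^ 2) (gaussianReal μ v) :=
  ((memLp_id_gaussianReal 2).sub (memLp_const μ)).integrable_sq

lemma integral_sub_sq_gaussianReal (μ : ℝ) (v : ℝ≥0) :
    ∫ x, (x - μ) ^ 2 ∂gaussianReal μ v = v := by
  have h := variance_id_gaussianReal (μ := μ) (v := v)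
  rw [variance_eq_integral aemeasurable_id] at h
  simpa using h

lemma integrable_one_add_sq_gaussianReal :
    Integrable (fun z ↦ 1 + z ^ 2) (gaussianReal 0 1) := by
  simpa using (integrable_const (1 : ℝ)).add (integrable_sub_sq_gaussianReal 0 1)

lemma integral_one_add_sq_gaussianReal : ∫ z, (1 + z ^ 2) ∂gaussianReal 0 1 = 2 := by
  have h_var : ∫ z, z ^ 2 ∂gaussianReal 0 1 = 1 := by
    simpa using integral_sub_sq_gaussianReal 0 1
  have h_int : Integrable (fun z ↦ z ^ 2) (gaussianReal 0 1) := by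
    simpa using integrable_sub_sq_gaussianReal 0 1
  rw [integral_add (integrable_const 1) h_int, h_var]
  norm_num

lemma integral_phi_mul_one_add_sq : ∫ z, phi z * (1 + z ^ 2) = 2 := by
  rw [← integral_gaussianReal_eq_integral_phi_mul, integral_one_add_sq_gaussianReal]

lemma integrable_phi_mul_one_add_sq : Integrable fun z ↦ phi z * (1 + z ^ 2) :=
  .of_integral_ne_zero (by rw [integral_phi_mul_one_add_sq]; norm_num)

lemma integrable_pow_mul_exp_mul_abs_gaussianReal (μ : ℝ) (v : ℝ≥0) (n : ℕ) (t : ℝ) :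
    Integrable (fun z ↦ z ^ n * rexp (t * |z|)) (gaussianReal μ v) := by
  have h (s : ℝ) : Integrable (fun z ↦ |z| ^ n * rexp (s * z)) (gaussianReal μ v) :=
    integrable_pow_abs_mul_exp_of_mem_interior_integrableExpSet (X := fun z ↦ z)
      (by simp [integrableExpSet_fun_id_gaussianReal]) n
  refine ((h t).add (h (-t))).mono' (by fun_prop) (.of_forall fun z ↦ ?_)
  rw [norm_mul, norm_pow, Real.norm_eq_abs, Real.norm_of_nonneg (exp_pos _).le]
  have h_pos (s : ℝ) : 0 ≤ |z| ^ n * rexp (s * z) := by positivity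
  rcases abs_cases z with ⟨hz, -⟩ | ⟨hz, -⟩
  · simpa [hz] using h_pos (-t)
  · simpa [hz] using h_pos t

lemma integrable_exp_mul_abs_gaussianReal (μ : ℝ) (v : ℝ≥0) (t : ℝ) :
    Integrable (fun z ↦ rexp (t * |z|)) (gaussianReal μ v) := by
  simpa using integrable_pow_mul_exp_mul_abs_gaussianReal μ v 0 t

lemma integrable_one_add_sq_mul_exp_mul_abs_gaussianReal (μ : ℝ) (v : ℝ≥0) (t : ℝ) :
    Integrable (fun z ↦ (1 + z ^ 2) * rexp (t * |z|)) (gaussianReal μ v) := by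
  simp only [add_mul, one_mul]
  exact (integrable_exp_mul_abs_gaussianReal μ v t).add
    (integrable_pow_mul_exp_mul_abs_gaussianReal μ v 2 t)

lemma integral_exp_mul_abs_gaussianReal_pos (μ : ℝ) (v : ℝ≥0) (t : ℝ) :
    0 < ∫ z, rexp (t * |z|) ∂gaussianReal μ v :=
  integral_exp_pos (integrable_exp_mul_abs_gaussianReal μ v t)

/-! ### Slabs with Lipschitz logarithm -/

lemma one_add_add_sq_le (a b : ℝ) : 1 + (a + b) ^ 2 ≤ 2 * (1 + a ^ 2) * (1 + b ^ 2) := by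
  nlinarith [sq_nonneg (a - b), sq_nonneg (a * b)]

/-- The class of slabs the argument works for: positive functions whose logarithm is
`L`-Lipschitz. No normalisation is imposed. -/
structure IsLogLipschitz (L : ℝ≥0) (γ : ℝ → ℝ) : Prop where
  pos : ∀ x, 0 < γ x
  lipschitzWith_log : LipschitzWith L fun x ↦ log (γ x)

/-- The constant `2 E[(1 + Z²) exp (L|Z|)] / E[exp (-L|Z|)]`, `Z ∼ N(0, 1)`, bounding the posterior
second moment under an `L`-log-Lipschitz slab `γ`. It does not depend on `γ`, since `γ (x + z)`
lies between `exp (-L|z|) γ x` and `exp (L|z|) γ x`. -/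
def slabConst (L : ℝ≥0) : ℝ :=
  2 * ((∫ z, (1 + z ^ 2) * rexp (L * |z|) ∂gaussianReal 0 1) /
    ∫ z, rexp (-L * |z|) ∂gaussianReal 0 1)

lemma slabConst_pos (L : ℝ≥0) : 0 < slabConst L := by
  have h_num : 0 < ∫ z, (1 + z ^ 2) * rexp (L * |z|) ∂gaussianReal 0 1 :=
    (integral_exp_mul_abs_gaussianReal_pos 0 1 L).trans_le <|
      integral_mono (integrable_exp_mul_abs_gaussianReal 0 1 L)
        (integrable_one_add_sq_mul_exp_mul_abs_gaussianReal 0 1 L) fun z ↦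
          le_mul_of_one_le_left (exp_pos _).le (le_add_of_nonneg_right (sq_nonneg z))
  have := integral_exp_mul_abs_gaussianReal_pos 0 1 (-L)
  unfold slabConst
  positivity

namespace IsLogLipschitz

variable {L : ℝ≥0} {γ : ℝ → ℝ}

lemma continuous (hγ : IsLogLipschitz L γ) : Continuous γ := by
  simpa only [Real.exp_log (hγ.pos _)] using hγ.lipschitzWith_log.continuous.rexp

lemma le_exp_mul (hγ : IsLogLipschitz L γ) (x y : ℝ) : γ x ≤ rexp (L * |x - y|) * γ y := by
  rw [← Real.log_le_log_iff (hγ.pos x) (mul_pos (exp_pos _) (hγ.pos y)),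
    Real.log_mul (exp_ne_zero _) (hγ.pos y).ne', Real.log_exp]
  have h := (le_abs_self _).trans (hγ.lipschitzWith_log.dist_le_mul x y)
  rw [Real.dist_eq] at h
  linarith

lemma comp_add_le (hγ : IsLogLipschitz L γ) (x z : ℝ) : γ (x + z) ≤ rexp (L * |z|) * γ x := by
  simpa using hγ.le_exp_mul (x + z) x

lemma exp_mul_le_comp_add (hγ : IsLogLipschitz L γ) (x z : ℝ) :
    rexp (-L * |z|) * γ x ≤ γ (x + z) := by
  have h := hγ.le_exp_mul x (x + z)
  rw [sub_add_cancel_left, abs_neg] at h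
  rwa [neg_mul, Real.exp_neg, inv_mul_le_iff₀ (exp_pos _)]

lemma integrable_one_add_sq_mul (hγ : IsLogLipschitz L γ) (x : ℝ) :
    Integrable (fun z ↦ (1 + z ^ 2) * γ (x + z)) (gaussianReal 0 1) := by
  have h_cont := hγ.continuous
  refine ((integrable_one_add_sq_mul_exp_mul_abs_gaussianReal 0 1 L).mul_const (γ x)).mono'
    (by fun_prop) (.of_forall fun z ↦ ?_)
  have h_pos := hγ.pos (x + z)
  rw [Real.norm_of_nonneg (by positivity), mul_assoc]
  gcongr
  exact hγ.comp_add_le x z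

lemma integrable_sq_mul (hγ : IsLogLipschitz L γ) (x μ : ℝ) :
    Integrable (fun z ↦ (x + z - μ) ^ 2 * γ (x + z)) (gaussianReal 0 1) := by
  have h_cont := hγ.continuous
  refine ((hγ.integrable_one_add_sq_mul x).const_mul (2 * (1 + (x - μ) ^ 2))).mono'
    (by fun_prop) (.of_forall fun z ↦ ?_)
  have h_pos := hγ.pos (x + z)
  rw [Real.norm_of_nonneg (by positivity), ← mul_assoc]
  gcongr
  have := one_add_add_sq_le (x - μ) z
  rw [show x + z - μ = x - μ + z by ring]
  linarith

lemma integrable_comp_add (hγ : IsLogLipschitz L γ) (x : ℝ) :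
    Integrable (fun z ↦ γ (x + z)) (gaussianReal 0 1) := by
  have h_cont := hγ.continuous
  refine (hγ.integrable_one_add_sq_mul x).mono' (by fun_prop) (.of_forall fun z ↦ ?_)
  have h_pos := hγ.pos (x + z)
  rw [Real.norm_of_nonneg h_pos.le]
  exact le_mul_of_one_le_left h_pos.le (le_add_of_nonneg_right (sq_nonneg z))

lemma integral_exp_mul_le_conv (hγ : IsLogLipschitz L γ) (x : ℝ) :
    (∫ z, rexp (-L * |z|) ∂gaussianReal 0 1) * γ x ≤ conv γ x := by
  rw [conv_eq_integral, ← integral_mul_const]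
  exact integral_mono ((integrable_exp_mul_abs_gaussianReal 0 1 _).mul_const _)
    (hγ.integrable_comp_add x) (hγ.exp_mul_le_comp_add x)

lemma conv_pos (hγ : IsLogLipschitz L γ) (x : ℝ) : 0 < conv γ x :=
  (mul_pos (integral_exp_mul_abs_gaussianReal_pos 0 1 _) (hγ.pos x)).trans_le
    (hγ.integral_exp_mul_le_conv x)

lemma conv_le_exp_mul (hγ : IsLogLipschitz L γ) (x y : ℝ) :
    conv γ x ≤ rexp (L * |x - y|) * conv γ y := by
  simp only [conv_eq_integral, ← integral_const_mul]
  refine integral_mono (hγ.integrable_comp_add x) ((hγ.integrable_comp_add y).const_mul _)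
    fun z ↦ ?_
  simpa using hγ.le_exp_mul (x + z) (y + z)

lemma integral_one_add_sq_mul_le (hγ : IsLogLipschitz L γ) (x : ℝ) :
    ∫ z, (1 + z ^ 2) * γ (x + z) ∂gaussianReal 0 1 ≤ slabConst L / 2 * conv γ x := by
  have h_low := integral_exp_mul_abs_gaussianReal_pos 0 1 (-L)
  have h_const := slabConst_pos L
  calc ∫ z, (1 + z ^ 2) * γ (x + z) ∂gaussianReal 0 1
      ≤ ∫ z, (1 + z ^ 2) * rexp (L * |z|) * γ x ∂gaussianReal 0 1 := by
        refine integral_mono (hγ.integrable_one_add_sq_mul x)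
          ((integrable_one_add_sq_mul_exp_mul_abs_gaussianReal 0 1 L).mul_const _) fun z ↦ ?_
        simp only [mul_assoc]
        gcongr
        exact hγ.comp_add_le x z
    _ = slabConst L / 2 * ((∫ z, rexp (-L * |z|) ∂gaussianReal 0 1) * γ x) := by
        rw [integral_mul_const, slabConst, mul_div_cancel_left₀ _ two_ne_zero, ← mul_assoc,
          div_mul_cancel₀ _ h_low.ne']
    _ ≤ slabConst L / 2 * conv γ x := by
        gcongr
        exact hγ.integral_exp_mul_le_conv x

lemma integral_sq_mul_le (hγ : IsLogLipschitz L γ) (x μ : ℝ) :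
    ∫ z, (x + z - μ) ^ 2 * γ (x + z) ∂gaussianReal 0 1 ≤
      slabConst L * ((x - μ) ^ 2 + 1) * conv γ x := by
  calc ∫ z, (x + z - μ) ^ 2 * γ (x + z) ∂gaussianReal 0 1
      ≤ ∫ z, 2 * (1 + (x - μ) ^ 2) * ((1 + z ^ 2) * γ (x + z)) ∂gaussianReal 0 1 := by
        refine integral_mono (hγ.integrable_sq_mul x μ)
          ((hγ.integrable_one_add_sq_mul x).const_mul _) fun z ↦ ?_
        have h_pos := hγ.pos (x + z)
        simp only [← mul_assoc]
        gcongr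
        have := one_add_add_sq_le (x - μ) z
        rw [show x + z - μ = x - μ + z by ring]
        linarith
    _ ≤ 2 * (1 + (x - μ) ^ 2) * (slabConst L / 2 * conv γ x) := by
        rw [integral_const_mul]
        gcongr
        exact hγ.integral_one_add_sq_mul_le x
    _ = slabConst L * ((x - μ) ^ 2 + 1) * conv γ x := by ring

end IsLogLipschitz

lemma one_add_sq_mul_cauchyDen (x : ℝ) : (1 + x ^ 2) * cauchyDen x = π⁻¹ := by
  have : 0 < 1 + x ^ 2 := by positivity
  unfold cauchyDen
  field_simp

lemma even_cauchyDen : Function.Even cauchyDen := fun x ↦ by simp only [cauchyDen, neg_sq]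

lemma isLogLipschitz_cauchyDen : IsLogLipschitz 1 cauchyDen where
  pos x := by
    unfold cauchyDen
    positivity
  lipschitzWith_log := by
    have h_pos (x : ℝ) : 0 < 1 + x ^ 2 := by positivity
    have h_log : (fun x ↦ log (cauchyDen x)) = fun x ↦ -(log π + log (1 + x ^ 2)) := by
      ext x
      rw [cauchyDen, Real.log_inv, Real.log_mul pi_ne_zero (h_pos x).ne']
    have h_deriv (x : ℝ) :
        HasDerivAt (fun x ↦ -(log π + log (1 + x ^ 2))) (-(2 * x / (1 + x ^ 2))) x := by
      simpa only [Nat.cast_ofNat, Nat.add_one_sub_one, pow_one] using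
        ((((hasDerivAt_pow 2 x).const_add 1).log (h_pos x).ne').const_add (log π)).fun_neg
    rw [h_log]
    refine lipschitzWith_of_nnnorm_deriv_le (fun x ↦ (h_deriv x).differentiableAt) fun x ↦ ?_
    rw [(h_deriv x).deriv, ← NNReal.coe_le_coe, coe_nnnorm, norm_neg, Real.norm_eq_abs, abs_div,
      abs_of_pos (h_pos x), NNReal.coe_one, div_le_one (h_pos x), abs_mul, abs_two]
    nlinarith [sq_nonneg (|x| - 1), sq_abs x]

lemma isLogLipschitz_lapDen : IsLogLipschitz 1 lapDen where
  pos x := by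
    unfold lapDen
    positivity
  lipschitzWith_log := by
    refine .of_le_add fun x y ↦ ?_
    simp only [lapDen, Real.log_div (exp_ne_zero _) two_ne_zero, Real.log_exp, Real.dist_eq]
    linarith [abs_sub_abs_le_abs_sub y x, abs_sub_comm x y]

lemma inv_pi_lt_phi_zero : π⁻¹ < phi 0 := by
  have h_sqrt : √(2 * π) < π := by
    rw [Real.sqrt_lt' pi_pos]
    nlinarith [pi_gt_three]
  rw [phi]
  simpa using inv_strictAnti₀ (by positivity) h_sqrt

/-! ### The posterior weight -/

/-- The posterior odds `a(x) / (1 - a(x))` of slab against spike, so that the threshold `τ(α)`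
solves `slabOdds γ α t = 1`. -/
def slabOdds (γ : ℝ → ℝ) (α x : ℝ) : ℝ := α / (1 - α) * (conv γ x / phi x)

section Weight

variable {γ : ℝ → ℝ} {α β x : ℝ}

lemma aWt_denom_pos (hα : α ∈ Icc 0 1) (hg : 0 < conv γ x) :
    0 < (1 - α) * phi x + α * conv γ x := by
  have h_spike := phi_pos x
  rcases hα.1.eq_or_lt with rfl | hα_pos
  · simpa
  · have : 0 ≤ 1 - α := sub_nonneg.2 hα.2
    positivity

lemma aWt_nonneg (hα : α ∈ Icc 0 1) (hg : 0 < conv γ x) : 0 ≤ aWt γ α x :=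
  div_nonneg (mul_nonneg hα.1 hg.le) (aWt_denom_pos hα hg).le

lemma one_sub_aWt (hα : α ∈ Icc 0 1) (hg : 0 < conv γ x) :
    1 - aWt γ α x = (1 - α) * phi x / ((1 - α) * phi x + α * conv γ x) := by
  rw [aWt, one_sub_div (aWt_denom_pos hα hg).ne', add_sub_cancel_right]

lemma aWt_le_one (hα : α ∈ Icc 0 1) (hg : 0 < conv γ x) : aWt γ α x ≤ 1 := by
  rw [← sub_nonneg, one_sub_aWt hα hg]
  exact div_nonneg (mul_nonneg (sub_nonneg.2 hα.2) (phi_pos x).le) (aWt_denom_pos hα hg).le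

lemma aWt_le_slabOdds (hα : α ∈ Ico 0 1) (hg : 0 < conv γ x) : aWt γ α x ≤ slabOdds γ α x := by
  have h_spike := phi_pos x
  have h_compl : 0 < 1 - α := sub_pos.2 hα.2
  have h_slab : 0 ≤ α * conv γ x := mul_nonneg hα.1 hg.le
  rw [slabOdds, div_mul_div_comm, aWt]
  gcongr
  linarith

lemma one_sub_aWt_le_inv_slabOdds (hβ : 0 < β) (hβα : β ≤ α) (hα : α ≤ 1)
    (hg : 0 < conv γ x) : 1 - aWt γ α x ≤ (slabOdds γ β x)⁻¹ := by
  have h_spike := phi_pos x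
  have hα_pos : 0 < α := hβ.trans_le hβα
  have h_compl : 0 ≤ 1 - α := sub_nonneg.2 hα
  have h_compl' : 0 ≤ 1 - β := h_compl.trans (sub_le_sub_left hβα 1)
  calc 1 - aWt γ α x
      = (1 - α) * phi x / ((1 - α) * phi x + α * conv γ x) := one_sub_aWt ⟨hα_pos.le, hα⟩ hg
    _ ≤ (1 - α) * phi x / (α * conv γ x) := by
        gcongr
        exact le_add_of_nonneg_left (by positivity)
    _ = (1 - α) / α * (phi x / conv γ x) := mul_div_mul_comm ..
    _ ≤ (1 - β) / β * (phi x / conv γ x) := by gcongr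
    _ = (slabOdds γ β x)⁻¹ := by rw [slabOdds, mul_inv, inv_div, inv_div]

lemma phi_eq_of_slabOdds_eq_one (h_odds : slabOdds γ α x = 1) :
    phi x = α / (1 - α) * conv γ x := by
  rw [slabOdds, ← mul_div_assoc, div_eq_one_iff_eq (phi_pos x).ne'] at h_odds
  exact h_odds.symm

end Weight

/-! ### The posterior second moment -/

lemma r2_nonneg (γ : ℝ → ℝ) (α μ x : ℝ) : 0 ≤ r2 γ α μ x :=
  integral_nonneg fun _ ↦ sq_nonneg _

section SecondMoment

variable {L : ℝ≥0} {γ : ℝ → ℝ} {α : ℝ}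

lemma coordDen_nonneg (hγ : IsLogLipschitz L γ) (hα : α ∈ Icc 0 1) (x u : ℝ) :
    0 ≤ coordDen γ α x u := by
  have h_slab := hγ.pos u
  have h_conv := hγ.conv_pos x
  have h_phi := phi_pos (x - u)
  have h_wt := aWt_nonneg hα h_conv
  unfold coordDen
  split_ifs
  · exact sub_nonneg.2 (aWt_le_one hα h_conv)
  · positivity

lemma measurable_coordDen (hγ : Measurable γ) (α x : ℝ) : Measurable (coordDen γ α x) := by
  have h_phi := continuous_phi.measurable
  unfold coordDen
  exact .ite (measurableSet_singleton 0) measurable_const (by fun_prop)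

lemma coordDen_mul_sq_ae_eq (γ : ℝ → ℝ) (α μ x : ℝ) :
    (fun u ↦ coordDen γ α x u * (u - μ) ^ 2) =ᵐ[volume]
      fun u ↦ aWt γ α x / conv γ x * (phi (x - u) * ((u - μ) ^ 2 * γ u)) := by
  filter_upwards [Measure.ae_ne volume (0 : ℝ)] with u hu
  simp only [coordDen, if_neg hu]
  ring

lemma r2_eq (hγ : IsLogLipschitz L γ) (hα : α ∈ Icc 0 1) (μ x : ℝ) :
    r2 γ α μ x = (1 - aWt γ α x) * μ ^ 2 +
      aWt γ α x / conv γ x * ∫ z, (x + z - μ) ^ 2 * γ (x + z) ∂gaussianReal 0 1 := by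
  have h_ae := coordDen_mul_sq_ae_eq γ α μ x
  have h_int : Integrable fun u ↦ coordDen γ α x u * (u - μ) ^ 2 :=
    ((integrable_phi_sub_mul (F := fun u ↦ (u - μ) ^ 2 * γ u)
      (hγ.integrable_sq_mul x μ)).const_mul _).congr h_ae.symm
  have h_meas := measurable_coordDen hγ.continuous.measurable α x
  rw [r2, coordPost, integral_withDensity_eq_integral_toReal_smul (by fun_prop)
    (.of_forall fun u ↦ ENNReal.ofReal_lt_top)]
  simp only [ENNReal.toReal_ofReal (coordDen_nonneg hγ hα x _), smul_eq_mul]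
  rw [integral_add_measure h_int (integrable_dirac enorm_lt_top), integral_congr_ae h_ae,
    integral_const_mul, integral_phi_sub_mul (fun u ↦ (u - μ) ^ 2 * γ u), integral_dirac,
    coordDen, if_pos rfl, zero_sub, neg_sq, add_comm]

lemma r2_le (hγ : IsLogLipschitz L γ) (hα : α ∈ Icc 0 1) (μ x : ℝ) :
    r2 γ α μ x ≤ (1 - aWt γ α x) * μ ^ 2 + slabConst L * aWt γ α x * ((x - μ) ^ 2 + 1) := by
  have h_conv := hγ.conv_pos x
  have h_wt := aWt_nonneg hα h_conv
  rw [r2_eq hγ hα]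
  refine add_le_add le_rfl ?_
  calc aWt γ α x / conv γ x * ∫ z, (x + z - μ) ^ 2 * γ (x + z) ∂gaussianReal 0 1
      ≤ aWt γ α x / conv γ x * (slabConst L * ((x - μ) ^ 2 + 1) * conv γ x) := by
        gcongr
        exact hγ.integral_sq_mul_le x μ
    _ = slabConst L * aWt γ α x * ((x - μ) ^ 2 + 1) := by field_simp

lemma r2_zero_le (hγ : IsLogLipschitz L γ) (hα : α ∈ Icc 0 1) (x : ℝ) :
    r2 γ α 0 x ≤ slabConst L * aWt γ α x * (1 + x ^ 2) :=
  (r2_le hγ hα 0 x).trans_eq (by ring)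

end SecondMoment

/-! ### Null signal -/

section Null

variable {L : ℝ≥0} {γ : ℝ → ℝ} {B α t : ℝ}

/-- An integrable envelope, up to a factor, for `φ(x) a(x) (1 + x²)` when the posterior odds
cross `1` at `t`: the indicator of `[-t, t]` plus Gaussian tails beyond `±t`. -/
def thresholdEnvelope (t x : ℝ) : ℝ :=
  (Icc (-t) t).indicator 1 x +
    2 / phi 0 * (phi (x - t) * (1 + (x - t) ^ 2) + phi (x + t) * (1 + (x + t) ^ 2))

lemma integrable_indicator_Icc_one (a b : ℝ) :
    Integrable ((Icc a b).indicator (1 : ℝ → ℝ)) :=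
  (integrableOn_const (by simp)).integrable_indicator measurableSet_Icc

lemma integrable_thresholdEnvelope (t : ℝ) : Integrable (thresholdEnvelope t) :=
  (integrable_indicator_Icc_one (-t) t).add <|
    ((integrable_phi_mul_one_add_sq.comp_sub_right t).add
      (integrable_phi_mul_one_add_sq.comp_add_right t)).const_mul _

lemma integral_thresholdEnvelope (ht : 0 ≤ t) :
    ∫ x, thresholdEnvelope t x = 2 * t + 8 / phi 0 := by
  have h_sub := integrable_phi_mul_one_add_sq.comp_sub_right t
  have h_add := integrable_phi_mul_one_add_sq.comp_add_right t
  have h_tails := h_sub.fun_add h_add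
  have h_len : ∫ x, (Icc (-t) t).indicator (1 : ℝ → ℝ) x = 2 * t := by
    rw [integral_indicator_one measurableSet_Icc, Real.volume_real_Icc_of_le (by linarith)]
    ring
  unfold thresholdEnvelope
  rw [integral_add (integrable_indicator_Icc_one (-t) t) (h_tails.const_mul _),
    integral_const_mul, integral_add h_sub h_add, h_len,
    integral_sub_right_eq_self (fun v ↦ phi v * (1 + v ^ 2)) t,
    integral_add_right_eq_self (fun v ↦ phi v * (1 + v ^ 2)) t, integral_phi_mul_one_add_sq]
  ring

lemma thresholdEnvelope_nonneg (t x : ℝ) : 0 ≤ thresholdEnvelope t x := by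
  have h0 := phi_pos 0
  have h_sub := phi_pos (x - t)
  have h_add := phi_pos (x + t)
  have h_ind : 0 ≤ (Icc (-t) t).indicator (1 : ℝ → ℝ) x := indicator_nonneg (by simp) x
  unfold thresholdEnvelope
  positivity

lemma one_le_thresholdEnvelope {x : ℝ} (hx : |x| ≤ t) : 1 ≤ thresholdEnvelope t x := by
  have h0 := phi_pos 0
  have h_sub := phi_pos (x - t)
  have h_add := phi_pos (x + t)
  rw [thresholdEnvelope, indicator_of_mem (show x ∈ Icc (-t) t from abs_le.1 hx), Pi.one_apply]
  exact le_add_of_nonneg_right (by positivity)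

lemma phi_mul_one_add_sq_le_thresholdEnvelope {x : ℝ} :
    2 / phi 0 * (phi (|x| - t) * (1 + (|x| - t) ^ 2)) ≤ thresholdEnvelope t x := by
  have h0 := phi_pos 0
  have h_ind : 0 ≤ (Icc (-t) t).indicator (1 : ℝ → ℝ) x := indicator_nonneg (by simp) x
  have h_pos (v : ℝ) : 0 ≤ phi v * (1 + v ^ 2) := mul_nonneg (phi_pos v).le (by positivity)
  refine le_add_of_nonneg_of_le h_ind ?_
  gcongr
  rcases abs_choice x with h | h
  · rw [h]
    exact le_add_of_nonneg_right (h_pos _)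
  · rw [h, ← neg_add', phi_neg, neg_sq]
    exact le_add_of_nonneg_left (h_pos _)

lemma conv_le_of_le (hγ : IsLogLipschitz L γ) (hB : ∀ x, γ x ≤ B) (x : ℝ) : conv γ x ≤ B := by
  rw [conv_eq_integral]
  exact (integral_mono (hγ.integrable_comp_add x) (integrable_const B) fun z ↦ hB _).trans_eq
    (by simp)

lemma one_add_sq_mul_conv_le (hγ : IsLogLipschitz L γ) (hB : ∀ x, (1 + x ^ 2) * γ x ≤ B)
    (x : ℝ) : (1 + x ^ 2) * conv γ x ≤ 4 * B := by
  calc (1 + x ^ 2) * conv γ x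
      = ∫ z, (1 + x ^ 2) * γ (x + z) ∂gaussianReal 0 1 := by
        rw [conv_eq_integral, integral_const_mul]
    _ ≤ ∫ z, 2 * B * (1 + z ^ 2) ∂gaussianReal 0 1 := by
        refine integral_mono ((hγ.integrable_comp_add x).const_mul _)
          (integrable_one_add_sq_gaussianReal.const_mul _) fun z ↦ ?_
        have h_pos := hγ.pos (x + z)
        calc (1 + x ^ 2) * γ (x + z)
            = (1 + (x + z + -z) ^ 2) * γ (x + z) := by ring
          _ ≤ 2 * (1 + (x + z) ^ 2) * (1 + (-z) ^ 2) * γ (x + z) := by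
              gcongr
              exact one_add_add_sq_le _ _
          _ = 2 * ((1 + (x + z) ^ 2) * γ (x + z)) * (1 + z ^ 2) := by ring
          _ ≤ 2 * B * (1 + z ^ 2) := by
              gcongr
              exact hB _
    _ = 4 * B := by
        rw [integral_const_mul, integral_one_add_sq_gaussianReal]
        ring

lemma phi_mul_one_add_sq_le {t x : ℝ} (ht : 0 ≤ t) (hx : t ≤ |x|) :
    phi x * (1 + x ^ 2) ≤
      phi t * (1 + t ^ 2) * (2 / phi 0 * (phi (|x| - t) * (1 + (|x| - t) ^ 2))) := by
  have h0 := phi_pos 0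
  have h_phi := phi_pos t
  have h_sq : 1 + x ^ 2 ≤ 2 * (1 + t ^ 2) * (1 + (|x| - t) ^ 2) := by
    simpa using one_add_add_sq_le t (|x| - t)
  calc phi x * (1 + x ^ 2)
      ≤ phi t * rexp (-(|x| - t) ^ 2 / 2) * (2 * (1 + t ^ 2) * (1 + (|x| - t) ^ 2)) := by
        gcongr
        exact phi_le_of_le_abs ht hx
    _ = phi t * (1 + t ^ 2) * (2 / phi 0 * (phi (|x| - t) * (1 + (|x| - t) ^ 2))) := by
        rw [← phi_zero_mul_exp (|x| - t)]
        field_simp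

lemma phi_mul_aWt_mul_le (hγ : IsLogLipschitz L γ) (hB : ∀ x, (1 + x ^ 2) * γ x ≤ B)
    (hα : α ∈ Ico 0 1) (ht : 0 ≤ t) (h_odds : slabOdds γ α t = 1) (x : ℝ) :
    phi x * (aWt γ α x * (1 + x ^ 2)) ≤ α / (1 - α) * (4 * B) * thresholdEnvelope t x := by
  have h_phi := phi_pos x
  have h_ratio : 0 ≤ α / (1 - α) := div_nonneg hα.1 (sub_nonneg.2 hα.2.le)
  have h_conv (y : ℝ) : α / (1 - α) * conv γ y * (1 + y ^ 2) ≤ α / (1 - α) * (4 * B) := by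
    rw [mul_assoc, mul_comm (conv γ y)]
    exact mul_le_mul_of_nonneg_left (one_add_sq_mul_conv_le hγ hB y) h_ratio
  have h_bound : 0 ≤ α / (1 - α) * (4 * B) :=
    le_trans (mul_nonneg (mul_nonneg h_ratio (hγ.conv_pos 0).le) (by positivity)) (h_conv 0)
  rcases le_total |x| t with hx | hx
  · calc phi x * (aWt γ α x * (1 + x ^ 2))
        ≤ phi x * (slabOdds γ α x * (1 + x ^ 2)) := by
          gcongr
          exact aWt_le_slabOdds hα (hγ.conv_pos x)
      _ = α / (1 - α) * conv γ x * (1 + x ^ 2) := by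
          rw [slabOdds]
          field_simp
      _ ≤ α / (1 - α) * (4 * B) * 1 := by simpa using h_conv x
      _ ≤ α / (1 - α) * (4 * B) * thresholdEnvelope t x := by
          gcongr
          exact one_le_thresholdEnvelope hx
  · calc phi x * (aWt γ α x * (1 + x ^ 2))
        ≤ phi x * (1 * (1 + x ^ 2)) := by
          gcongr
          exact aWt_le_one ⟨hα.1, hα.2.le⟩ (hγ.conv_pos x)
      _ ≤ phi t * (1 + t ^ 2) * (2 / phi 0 * (phi (|x| - t) * (1 + (|x| - t) ^ 2))) := by
          rw [one_mul]
          exact phi_mul_one_add_sq_le ht hx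
      _ ≤ phi t * (1 + t ^ 2) * thresholdEnvelope t x := by
          have := phi_pos t
          gcongr
          exact phi_mul_one_add_sq_le_thresholdEnvelope
      _ ≤ α / (1 - α) * (4 * B) * thresholdEnvelope t x := by
          rw [phi_eq_of_slabOdds_eq_one h_odds]
          exact mul_le_mul_of_nonneg_right (h_conv t) (thresholdEnvelope_nonneg t x)

lemma integral_r2_zero_le (hγ : IsLogLipschitz L γ) (hB : ∀ x, (1 + x ^ 2) * γ x ≤ B)
    (hα : α ∈ Ico 0 1) (ht : 0 ≤ t) (h_odds : slabOdds γ α t = 1) :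
    ∫ x, r2 γ α 0 x ∂gaussianReal 0 1 ≤
      slabConst L * (α / (1 - α) * (4 * B)) * (2 * t + 8 / phi 0) := by
  rw [integral_gaussianReal_eq_integral_phi_mul, ← integral_thresholdEnvelope ht,
    ← integral_const_mul]
  refine integral_mono_of_nonneg
    (.of_forall fun x ↦ mul_nonneg (phi_pos x).le (r2_nonneg γ α 0 x))
    ((integrable_thresholdEnvelope t).const_mul _) (.of_forall fun x ↦ ?_)
  have h_phi := phi_pos x
  have h_const := slabConst_pos L
  calc phi x * r2 γ α 0 x
      ≤ phi x * (slabConst L * aWt γ α x * (1 + x ^ 2)) := by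
        gcongr
        exact r2_zero_le hγ ⟨hα.1, hα.2.le⟩ x
    _ = slabConst L * (phi x * (aWt γ α x * (1 + x ^ 2))) := by ring
    _ ≤ slabConst L * (α / (1 - α) * (4 * B) * thresholdEnvelope t x) :=
        mul_le_mul_of_nonneg_left (phi_mul_aWt_mul_le hγ hB hα ht h_odds x) h_const.le
    _ = slabConst L * (α / (1 - α) * (4 * B)) * thresholdEnvelope t x := by ring

lemma exists_integral_r2_zero_le (L : ℝ≥0) (hB : B < phi 0) :
    ∃ C, ∀ γ, IsLogLipschitz L γ → (∀ x, (1 + x ^ 2) * γ x ≤ B) → ∀ α ∈ Ioc (0 : ℝ) (1 / 2),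
      ∀ t, 0 ≤ t → slabOdds γ α t = 1 → ∫ x, r2 γ α 0 x ∂gaussianReal 0 1 ≤ C * t * α := by
  obtain ⟨ε, hε, h_le⟩ := exists_pos_le_of_phi_le hB
  refine ⟨slabConst L * (8 * B) * (2 + 8 / (phi 0 * ε)), fun γ hγ hγB α hα t ht h_odds ↦ ?_⟩
  have h0 := phi_pos 0
  have h_const := slabConst_pos L
  have h_compl : 1 / 2 ≤ 1 - α := by linarith [hα.2]
  have hγ_le (x : ℝ) : γ x ≤ B :=
    (le_mul_of_one_le_left (hγ.pos x).le (le_add_of_nonneg_right (sq_nonneg x))).trans (hγB x)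
  have hB_pos : 0 < B := (hγ.pos 0).trans_le (hγ_le 0)
  have hεt : ε ≤ t := by
    refine h_le t ht ?_
    rw [phi_eq_of_slabOdds_eq_one h_odds]
    refine (mul_le_of_le_one_left (hγ.conv_pos t).le ?_).trans (conv_le_of_le hγ hγ_le t)
    exact div_le_one_of_le₀ (by linarith [hα.2]) (by linarith)
  have h_ratio : α / (1 - α) ≤ 2 * α := by
    rw [div_le_iff₀ (by linarith)]
    nlinarith [hα.1]
  have h_env : 2 * t + 8 / phi 0 ≤ (2 + 8 / (phi 0 * ε)) * t := by
    have : 8 / phi 0 = 8 / (phi 0 * ε) * ε := by field_simp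
    rw [add_mul, this]
    gcongr
  calc ∫ x, r2 γ α 0 x ∂gaussianReal 0 1
      ≤ slabConst L * (α / (1 - α) * (4 * B)) * (2 * t + 8 / phi 0) :=
        integral_r2_zero_le hγ hγB ⟨hα.1.le, by linarith⟩ ht h_odds
    _ ≤ slabConst L * (2 * α * (4 * B)) * ((2 + 8 / (phi 0 * ε)) * t) := by
        have := hα.1
        gcongr
    _ = slabConst L * (8 * B) * (2 + 8 / (phi 0 * ε)) * t * α := by ring

end Null

/-! ### Arbitrary signal -/

section Signal

variable {L : ℝ≥0} {γ : ℝ → ℝ} {α β t : ℝ}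

lemma slabOdds_mul_exp_le (hγ : IsLogLipschitz L γ) (h_even : Function.Even γ)
    (hα : α ∈ Icc 0 1) (ht : 0 ≤ t) {x : ℝ} (hx : t ≤ |x|) :
    slabOdds γ α t * rexp ((|x| - t) ^ 2 / 2 - L * (|x| - t)) ≤ slabOdds γ α x := by
  have h_phi := phi_pos t
  have h_phi' := phi_pos x
  have h_conv := hγ.conv_pos x
  have h_ratio : 0 ≤ α / (1 - α) := div_nonneg hα.1 (sub_nonneg.2 hα.2)
  have h_slab : conv γ t ≤ rexp (L * (|x| - t)) * conv γ x := by
    simpa [abs_sub_comm t, abs_of_nonneg (sub_nonneg.2 hx), conv_abs h_even]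
      using hγ.conv_le_exp_mul t |x|
  have h_spike := phi_le_of_le_abs ht hx
  simp only [slabOdds, mul_assoc]
  gcongr
  rw [div_mul_eq_mul_div, div_le_div_iff₀ h_phi h_phi']
  calc conv γ t * rexp ((|x| - t) ^ 2 / 2 - L * (|x| - t)) * phi x
      ≤ rexp (L * (|x| - t)) * conv γ x * rexp ((|x| - t) ^ 2 / 2 - L * (|x| - t)) *
          (phi t * rexp (-(|x| - t) ^ 2 / 2)) := by gcongr
    _ = conv γ x * phi t * rexp (L * (|x| - t) + ((|x| - t) ^ 2 / 2 - L * (|x| - t)) +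
          -(|x| - t) ^ 2 / 2) := by
        simp only [Real.exp_add]
        ring
    _ = conv γ x * phi t := by
        ring_nf
        simp

lemma sq_mul_exp_le (L s : ℝ) : s ^ 2 * rexp (L * s - s ^ 2 / 2) ≤ 4 * rexp (L ^ 2) := by
  have h_sq : s ^ 2 ≤ 4 * rexp (s ^ 2 / 4) := by linarith [Real.add_one_le_exp (s ^ 2 / 4)]
  calc s ^ 2 * rexp (L * s - s ^ 2 / 2)
      ≤ 4 * rexp (s ^ 2 / 4) * rexp (L * s - s ^ 2 / 2) := by gcongr
    _ = 4 * rexp (s ^ 2 / 4 + (L * s - s ^ 2 / 2)) := by rw [Real.exp_add, mul_assoc]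
    _ ≤ 4 * rexp (L ^ 2) := by
        gcongr
        nlinarith [sq_nonneg (s / 2 - L)]

lemma one_sub_aWt_mul_posPart_sq_le (hγ : IsLogLipschitz L γ) (h_even : Function.Even γ)
    (hα : α ≤ 1) (hβ : β ∈ Ioc 0 α) (ht : 0 ≤ t) (h_odds : slabOdds γ β t = 1) (x : ℝ) :
    (1 - aWt γ α x) * (|x| - t)⁺ ^ 2 ≤ 4 * rexp (L ^ 2) := by
  rcases le_total |x| t with hx | hx
  · rw [posPart_of_nonpos (sub_nonpos.2 hx)]
    simpa using (exp_pos _).le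
  rw [posPart_of_nonneg (sub_nonneg.2 hx)]
  set s := |x| - t
  have h_lower : rexp (s ^ 2 / 2 - L * s) ≤ slabOdds γ β x := by
    simpa [h_odds] using slabOdds_mul_exp_le hγ h_even ⟨hβ.1.le, hβ.2.trans hα⟩ ht hx
  calc (1 - aWt γ α x) * s ^ 2
      ≤ (slabOdds γ β x)⁻¹ * s ^ 2 := by
        gcongr
        exact one_sub_aWt_le_inv_slabOdds hβ.1 hβ.2 hα (hγ.conv_pos x)
    _ ≤ (rexp (s ^ 2 / 2 - L * s))⁻¹ * s ^ 2 := by gcongr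
    _ = s ^ 2 * rexp (L * s - s ^ 2 / 2) := by rw [← Real.exp_neg, neg_sub, mul_comm]
    _ ≤ 4 * rexp (L ^ 2) := sq_mul_exp_le L s

lemma sq_le_three_mul_posPart (t μ x : ℝ) :
    μ ^ 2 ≤ 3 * ((x - μ) ^ 2 + t ^ 2 + (|x| - t)⁺ ^ 2) := by
  have h_abs : |μ| ≤ |x - μ| + t + (|x| - t)⁺ := by
    linarith [abs_sub_abs_le_abs_sub μ x, abs_sub_comm μ x, le_posPart (|x| - t)]
  calc μ ^ 2 ≤ (|x - μ| + t + (|x| - t)⁺) ^ 2 := by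
        rw [← sq_abs μ]
        gcongr
    _ ≤ 3 * (|x - μ| ^ 2 + t ^ 2 + (|x| - t)⁺ ^ 2) := by
        nlinarith [sq_nonneg (|x - μ| - t), sq_nonneg (|x - μ| - (|x| - t)⁺),
          sq_nonneg (t - (|x| - t)⁺)]
    _ = 3 * ((x - μ) ^ 2 + t ^ 2 + (|x| - t)⁺ ^ 2) := by rw [sq_abs]

lemma one_sub_aWt_mul_sq_le (hγ : IsLogLipschitz L γ) (h_even : Function.Even γ)
    (hα : α ≤ 1) (hβ : β ∈ Ioc 0 α) (ht : 0 ≤ t) (h_odds : slabOdds γ β t = 1) (μ x : ℝ) :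
    (1 - aWt γ α x) * μ ^ 2 ≤ 3 * (x - μ) ^ 2 + 3 * t ^ 2 + 12 * rexp (L ^ 2) := by
  have hα' : α ∈ Icc 0 1 := ⟨hβ.1.le.trans hβ.2, hα⟩
  have h_nonneg := sub_nonneg.2 (aWt_le_one hα' (hγ.conv_pos x))
  have h_le_one := sub_le_self 1 (aWt_nonneg hα' (hγ.conv_pos x))
  have h_excess := one_sub_aWt_mul_posPart_sq_le hγ h_even hα hβ ht h_odds x
  calc (1 - aWt γ α x) * μ ^ 2
      ≤ (1 - aWt γ α x) * (3 * ((x - μ) ^ 2 + t ^ 2 + (|x| - t)⁺ ^ 2)) := by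
        gcongr
        exact sq_le_three_mul_posPart t μ x
    _ = (1 - aWt γ α x) * (3 * ((x - μ) ^ 2 + t ^ 2)) +
          3 * ((1 - aWt γ α x) * (|x| - t)⁺ ^ 2) := by ring
    _ ≤ 1 * (3 * ((x - μ) ^ 2 + t ^ 2)) + 3 * (4 * rexp (L ^ 2)) := by gcongr
    _ = 3 * (x - μ) ^ 2 + 3 * t ^ 2 + 12 * rexp (L ^ 2) := by ring

lemma integral_r2_le (hγ : IsLogLipschitz L γ) (h_even : Function.Even γ)
    (hα : α ≤ 1) (hβ : β ∈ Ioc 0 α) (ht : 0 ≤ t) (h_odds : slabOdds γ β t = 1) (μ : ℝ) :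
    ∫ x, r2 γ α μ x ∂gaussianReal μ 1 ≤
      (3 + 12 * rexp (L ^ 2) + 2 * slabConst L) * (1 + t ^ 2) := by
  have h_const := slabConst_pos L
  have h_exp := exp_pos ((L : ℝ) ^ 2)
  have h_int := integrable_sub_sq_gaussianReal μ 1
  have hα' : α ∈ Icc 0 1 := ⟨hβ.1.le.trans hβ.2, hα⟩
  have h_le (x : ℝ) : r2 γ α μ x ≤
      (3 + slabConst L) * (x - μ) ^ 2 + (3 * t ^ 2 + 12 * rexp (L ^ 2) + slabConst L) := by
    have h_slab : slabConst L * aWt γ α x * ((x - μ) ^ 2 + 1) ≤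
        slabConst L * 1 * ((x - μ) ^ 2 + 1) := by
      gcongr
      exact aWt_le_one hα' (hγ.conv_pos x)
    linarith [r2_le hγ hα' μ x, one_sub_aWt_mul_sq_le hγ h_even hα hβ ht h_odds μ x]
  calc ∫ x, r2 γ α μ x ∂gaussianReal μ 1
      ≤ ∫ x, ((3 + slabConst L) * (x - μ) ^ 2 +
          (3 * t ^ 2 + 12 * rexp (L ^ 2) + slabConst L)) ∂gaussianReal μ 1 :=
        integral_mono_of_nonneg (.of_forall fun x ↦ r2_nonneg γ α μ x)
          ((h_int.const_mul _).add (integrable_const _)) (.of_forall h_le)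
    _ = 3 + 12 * rexp (L ^ 2) + 2 * slabConst L + 3 * t ^ 2 := by
        rw [integral_add (h_int.const_mul _) (integrable_const _), integral_const_mul,
          integral_sub_sq_gaussianReal, integral_const, probReal_univ, NNReal.coe_one,
          one_smul]
        ring
    _ ≤ (3 + 12 * rexp (L ^ 2) + 2 * slabConst L) * (1 + t ^ 2) := by
        nlinarith [sq_nonneg t, mul_nonneg h_exp.le (sq_nonneg t),
          mul_nonneg h_const.le (sq_nonneg t)]

end Signal

theorem fixed_alpha_r2_bounds_general (L : ℝ≥0) {B : ℝ} (hB : B < phi 0) :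
    ∃ C > 0, ∀ γ, IsLogLipschitz L γ →
      (∀ α ∈ Ico (0 : ℝ) 1, ∀ x,
        r2 γ α 0 x ≤ C * min 1 (slabOdds γ α x) * (1 + x ^ 2)) ∧
      (∀ α ∈ Icc (0 : ℝ) 1, ∀ x μ,
        r2 γ α μ x ≤ (1 - aWt γ α x) * μ ^ 2 + C * aWt γ α x * ((x - μ) ^ 2 + 1)) ∧
      ((∀ x, (1 + x ^ 2) * γ x ≤ B) → ∀ α ∈ Ioc (0 : ℝ) (1 / 2), ∀ t, 0 ≤ t →
        slabOdds γ α t = 1 → ∫ x, r2 γ α 0 x ∂gaussianReal 0 1 ≤ C * t * α) ∧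
      (Function.Even γ → ∀ α ≤ 1, ∀ β ∈ Ioc 0 α, ∀ t, 0 ≤ t → slabOdds γ β t = 1 →
        ∀ μ, ∫ x, r2 γ α μ x ∂gaussianReal μ 1 ≤ C * (1 + t ^ 2)) := by
  obtain ⟨D, hD⟩ := exists_integral_r2_zero_le L hB
  set E := 3 + 12 * rexp (L ^ 2) + 2 * slabConst L
  set C := max (slabConst L) (max D E)
  have hC_slab : slabConst L ≤ C := le_max_left ..
  have hDC : D ≤ C := (le_max_left ..).trans (le_max_right ..)
  have hEC : E ≤ C := (le_max_right ..).trans (le_max_right ..)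
  have hC : 0 < C := (slabConst_pos L).trans_le hC_slab
  refine ⟨C, hC, fun γ hγ ↦ ⟨fun α hα x ↦ ?_, fun α hα x μ ↦ ?_,
    fun hγB α hα t ht h_odds ↦ ?_, fun h_even α hα β hβ t ht h_odds μ ↦ ?_⟩⟩
  · have h_conv := hγ.conv_pos x
    have hα' : α ∈ Icc 0 1 := ⟨hα.1, hα.2.le⟩
    have h_wt := aWt_nonneg hα' h_conv
    refine (r2_zero_le hγ hα' x).trans ?_
    gcongr
    exact le_min (aWt_le_one hα' h_conv) (aWt_le_slabOdds hα h_conv)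
  · have h_wt := aWt_nonneg hα (hγ.conv_pos x)
    refine (r2_le hγ hα μ x).trans ?_
    gcongr
  · have := hα.1
    refine (hD γ hγ hγB α hα t ht h_odds).trans ?_
    gcongr
  · refine (integral_r2_le hγ h_even hα hβ ht h_odds μ).trans ?_
    gcongr

/-- Lemma 1: fixed-`α` posterior second moment bounds.
For `γ` Cauchy or Laplace there is `C > 0` with, for all `x` and
`α ∈ [0, 1/2]`: `r₂(α,0,x) ≤ C [1 ∧ (α/(1-α)) (g/φ)(x)] (1+x²)` and
`r₂(α,μ,x) ≤ (1-a(x)) μ² + C a(x) ((x-μ)² + 1)`.  For `γ` Cauchy, in terms of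
the threshold `τ(α)` (solving `(α/(1-α))(g/φ)(τ(α)) = 1`, `τ(α₀) = 1`,
`τ̃(α) = τ(α ∧ α₀)`): `E₀ r₂(α,0,X) ≤ C τ(α) α` and
`E_μ r₂(α,μ,X) ≤ C (1 + τ̃(α)²)`. -/
theorem fixed_alpha_r2_bounds :
    ∃ C > (0 : ℝ),
      (∀ γ : ℝ → ℝ, γ = cauchyDen ∨ γ = lapDen →
        ∀ x : ℝ, ∀ α ∈ Set.Icc (0 : ℝ) (1 / 2),
          r2 γ α 0 x ≤ C * min 1 (α / (1 - α) * (conv γ x / phi x)) * (1 + x ^ 2) ∧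
          ∀ μ : ℝ,
            r2 γ α μ x ≤ (1 - aWt γ α x) * μ ^ 2 + C * aWt γ α x * ((x - μ) ^ 2 + 1)) ∧
      (∀ τ : ℝ → ℝ, ∀ α0 ∈ Set.Ioo (0 : ℝ) 1, τ α0 = 1 →
        (∀ a ∈ Set.Ioc (0 : ℝ) (max α0 (1 / 2)),
          0 ≤ τ a ∧ a / (1 - a) * (conv cauchyDen (τ a) / phi (τ a)) = 1) →
        ∀ α ∈ Set.Ioc (0 : ℝ) (1 / 2),
          (∫ x, r2 cauchyDen α 0 x ∂(ProbabilityTheory.gaussianReal 0 1)) ≤ C * τ α * α ∧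
          ∀ μ : ℝ,
            (∫ x, r2 cauchyDen α μ x ∂(ProbabilityTheory.gaussianReal μ 1)) ≤
              C * (1 + τ (min α α0) ^ 2)) := by
  obtain ⟨C, hC, hr⟩ := fixed_alpha_r2_bounds_general 1 inv_pi_lt_phi_zero
  obtain ⟨-, -, h_null, h_mean⟩ := hr _ isLogLipschitz_cauchyDen
  refine ⟨C, hC, fun γ hγ x α hα ↦ ?_, fun τ α0 hα0 _ hτ α hα ↦ ⟨?_, fun μ ↦ ?_⟩⟩
  · have hγ' : IsLogLipschitz 1 γ := by
      rcases hγ with rfl | rfl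
      exacts [isLogLipschitz_cauchyDen, isLogLipschitz_lapDen]
    obtain ⟨h_zero, h_all, -⟩ := hr γ hγ'
    exact ⟨h_zero α ⟨hα.1, by linarith [hα.2]⟩ x, h_all α ⟨hα.1, by linarith [hα.2]⟩ x⟩
  · obtain ⟨ht, h_odds⟩ := hτ α ⟨hα.1, hα.2.trans (le_max_right ..)⟩
    exact h_null (fun x ↦ (one_add_sq_mul_cauchyDen x).le) α hα _ ht h_odds
  · have h_min : 0 < min α α0 := lt_min hα.1 hα0.1
    obtain ⟨ht, h_odds⟩ := hτ (min α α0) ⟨h_min, (min_le_right ..).trans (le_max_left ..)⟩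
    exact h_mean even_cauchyDen α (by linarith [hα.2]) _ ⟨h_min, min_le_left ..⟩ _ ht h_odds μ

end
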